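/- Let f: A → B be a surjective homomorphism of MV-algebras. Let Eq(f) := {(a₁,a₂) ∈ A×A : f(a₁)=f(a₂)} with componentwise operations, and let π₁: Eq(f) → A be the first projection. Then the restriction P(π₁): P(Eq(f)) → P(A) is an isomorphism (i.e. f is a normal extension for the Galois structure of the semisimple reflection) if and only if P(f): P(A) → P(B) is injective, or (Rad(A)={0}, A is nontrivial, and B is trivial). -/

import Mathlib

namespace MVPaper

/-- An MV-algebra: a set with a binary `⊕`, a unary `¬`, and a constant `0`
satisfying the MV-algebra axioms. -/
class MV (α : Type*) where
  oplus : α → α → α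
  neg : α → α
  zero : α
  oplus_assoc : ∀ x y z : α, oplus x (oplus y z) = oplus (oplus x y) z
  oplus_comm : ∀ x y : α, oplus x y = oplus y x
  oplus_zero : ∀ x : α, oplus x zero = x
  neg_neg : ∀ x : α, neg (neg x) = x
  oplus_neg_zero : ∀ x : α, oplus x (neg zero) = neg zero
  lukasiewicz : ∀ x y : α,
    oplus (neg (oplus (neg x) y)) y = oplus (neg (oplus (neg y) x)) x

namespace MV

variable {α : Type*} [MV α]

/-- `1 := ¬0`. -/
def one : α := neg zero

/-- `x ⊙ y := ¬(¬x ⊕ ¬y)`. -/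
def odot (x y : α) : α := neg (oplus (neg x) (neg y))

/-- `x ⊖ y := ¬(¬x ⊕ y)`. -/
def ominus (x y : α) : α := neg (oplus (neg x) y)

/-- `d(x,y) := (x ⊖ y) ⊕ (y ⊖ x)`. -/
def dist (x y : α) : α := oplus (ominus x y) (ominus y x)

/-- The natural order: `x ≤ y` iff `¬x ⊕ y = 1`. -/
def le (x y : α) : Prop := oplus (neg x) y = one

/-- `x ∨ y := (x ⊖ y) ⊕ y`. -/
def sup (x y : α) : α := oplus (ominus x y) y

/-- `x ∧ y := x ⊙ (¬x ⊕ y)`. -/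
def inf (x y : α) : α := odot x (oplus (neg x) y)

/-- `n · a`, the `n`-fold sum `a ⊕ ⋯ ⊕ a`. -/
def nsmul : ℕ → α → α
  | 0, _ => zero
  | n + 1, a => oplus a (nsmul n a)

end MV

/-- Products of MV-algebras, with componentwise operations. -/
instance prodMV {α β : Type*} [MV α] [MV β] : MV (α × β) where
  oplus x y := (MV.oplus x.1 y.1, MV.oplus x.2 y.2)
  neg x := (MV.neg x.1, MV.neg x.2)
  zero := (MV.zero, MV.zero)
  oplus_assoc x y z :=
    congrArg₂ Prod.mk (MV.oplus_assoc _ _ _) (MV.oplus_assoc _ _ _)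
  oplus_comm x y :=
    congrArg₂ Prod.mk (MV.oplus_comm _ _) (MV.oplus_comm _ _)
  oplus_zero x := by
    obtain ⟨a, b⟩ := x
    exact congrArg₂ Prod.mk (MV.oplus_zero a) (MV.oplus_zero b)
  neg_neg x := by
    obtain ⟨a, b⟩ := x
    exact congrArg₂ Prod.mk (MV.neg_neg a) (MV.neg_neg b)
  oplus_neg_zero x :=
    congrArg₂ Prod.mk (MV.oplus_neg_zero _) (MV.oplus_neg_zero _)
  lukasiewicz x y :=
    congrArg₂ Prod.mk (MV.lukasiewicz _ _) (MV.lukasiewicz _ _)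

/-- A homomorphism of MV-algebras: a map preserving `⊕`, `¬` and `0`. -/
structure IsHom {α β : Type*} [MV α] [MV β] (f : α → β) : Prop where
  map_zero : f MV.zero = MV.zero
  map_oplus : ∀ x y : α, f (MV.oplus x y) = MV.oplus (f x) (f y)
  map_neg : ∀ x : α, f (MV.neg x) = MV.neg (f x)

/-- An ideal of an MV-algebra: contains `0`, closed under `⊕`, downward closed. -/
structure IsIdeal {α : Type*} [MV α] (I : Set α) : Prop where
  zero_mem : MV.zero ∈ I
  oplus_mem : ∀ ⦃x⦄, x ∈ I → ∀ ⦃y⦄, y ∈ I → MV.oplus x y ∈ I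
  lower_mem : ∀ ⦃x⦄, x ∈ I → ∀ ⦃y⦄, MV.le y x → y ∈ I

/-- The kernel of a homomorphism. -/
def ker {α β : Type*} [MV α] [MV β] (f : α → β) : Set α := {x | f x = MV.zero}

/-- The radical of an MV-algebra: `Rad(A) = {a | n·a ≤ ¬a for all n}`
(the intersection of all maximal proper ideals). -/
def Rad (α : Type*) [MV α] : Set α :=
  {a | ∀ n : ℕ, MV.le (MV.nsmul n a) (MV.neg a)}

/-- `P(A) := Rad(A) ∪ ¬Rad(A)`. -/
def PSet (α : Type*) [MV α] : Set α :=
  Rad α ∪ {x | MV.neg x ∈ Rad α}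

/-- An MV-algebra is trivial if `0 = 1`. -/
def IsTrivial (α : Type*) [MV α] : Prop := (MV.zero : α) = MV.one

/-- An MV-algebra is semisimple if its radical is trivial. -/
def Semisimple (α : Type*) [MV α] : Prop := Rad α = ({MV.zero} : Set α)

/-- An MV-algebra is perfect if `A = Rad(A) ∪ ¬Rad(A)`. -/
def Perfect (α : Type*) [MV α] : Prop := ∀ a : α, a ∈ PSet α

/-- `q : α → Q` realizes `Q` as the quotient of `α` by the ideal `I`,
i.e. by the congruence `x ∼ y ↔ d(x,y) ∈ I`. -/
structure IsQuotientBy {α Q : Type*} [MV α] [MV Q] (I : Set α) (q : α → Q) : Prop where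
  hom : IsHom q
  surj : Function.Surjective q
  eq_iff : ∀ x y : α, q x = q y ↔ MV.dist x y ∈ I

/-!
Both sides say that `f` is injective on `Rad(A)`. The map `P(π₁)` is onto because of the diagonal.
For nontrivial `A` the sets `Rad(A)` and `¬Rad(A)` are disjoint, so two elements of `P(Eq(f))` over
the same point lie both in `Rad(A) × Rad(A)` or both in `¬Rad(A) × ¬Rad(A)`, and `¬` exchanges
the two cases. For nontrivial `B` the images of `Rad(A)` and `¬Rad(A)` are disjoint too, so that
injectivity on `Rad(A)` is injectivity on `P(A)`; for trivial `B` it means `Rad(A) = {0}`.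
-/

namespace MV

variable {α : Type*} [MV α]

theorem zero_oplus (x : α) : oplus zero x = x := by rw [oplus_comm, oplus_zero]

theorem oplus_one (x : α) : oplus x one = one := oplus_neg_zero x

theorem neg_one : neg (one : α) = zero := neg_neg zero

theorem neg_injective : Function.Injective (neg : α → α) :=
  Function.LeftInverse.injective neg_neg

theorem nsmul_one (a : α) : nsmul 1 a = a := oplus_zero a

theorem nsmul_two (a : α) : nsmul 2 a = oplus a a := congrArg (oplus a) (nsmul_one a)

end MV

section Rad

variable {α : Type*} [MV α]

theorem IsTrivial.subsingleton (h : IsTrivial α) : Subsingleton α := by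
  have eq_one (x : α) : x = MV.one :=
    calc
      x = MV.oplus x MV.zero := (MV.oplus_zero x).symm
      _ = MV.oplus x MV.one := congrArg (MV.oplus x) h
      _ = MV.one := MV.oplus_one x
  exact ⟨fun x y => (eq_one x).trans (eq_one y).symm⟩

theorem zero_mem_rad (α : Type*) [MV α] : (MV.zero : α) ∈ Rad α :=
  fun _ => MV.oplus_one _

theorem isTrivial_of_mem_rad_of_neg_mem_rad {a : α} (ha : a ∈ Rad α)
    (ha' : MV.neg a ∈ Rad α) : IsTrivial α := by
  have oplus_self : MV.oplus a a = MV.one := by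
    simpa only [MV.le, MV.nsmul_one, MV.neg_neg] using ha' 1
  have neg_eq_one : MV.neg a = MV.one := by
    simpa only [MV.le, MV.nsmul_two, oplus_self, MV.neg_one, MV.zero_oplus] using ha 2
  have eq_zero : a = MV.zero := by rw [← MV.neg_neg a, neg_eq_one, MV.neg_one]
  rwa [eq_zero, MV.oplus_zero] at oplus_self

theorem disjoint_rad_preimage_neg_rad (hα : ¬ IsTrivial α) :
    Disjoint (Rad α) (MV.neg ⁻¹' Rad α) :=
  Set.disjoint_left.2 fun _ ha ha' => hα (isTrivial_of_mem_rad_of_neg_mem_rad ha ha')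

end Rad

namespace IsHom

variable {α β : Type*} [MV α] [MV β] {f : α → β}

theorem map_one (hf : IsHom f) : f MV.one = MV.one := by
  rw [MV.one, hf.map_neg, hf.map_zero, MV.one]

theorem map_le (hf : IsHom f) {x y : α} (h : MV.le x y) : MV.le (f x) (f y) := by
  rw [MV.le, ← hf.map_neg, ← hf.map_oplus, h, hf.map_one]

theorem map_nsmul (hf : IsHom f) (n : ℕ) (a : α) : f (MV.nsmul n a) = MV.nsmul n (f a) := by
  induction n with
  | zero => exact hf.map_zero
  | succ n ih => rw [MV.nsmul, hf.map_oplus, ih, MV.nsmul]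

theorem mapsTo_rad (hf : IsHom f) : Set.MapsTo f (Rad α) (Rad β) := fun a ha n => by
  simpa only [hf.map_nsmul, hf.map_neg] using hf.map_le (ha n)

theorem mapsTo_preimage_neg_rad (hf : IsHom f) :
    Set.MapsTo f (MV.neg ⁻¹' Rad α) (MV.neg ⁻¹' Rad β) := fun a ha => by
  simpa only [Set.mem_preimage, hf.map_neg] using hf.mapsTo_rad ha

theorem mapsTo_pSet (hf : IsHom f) : Set.MapsTo f (PSet α) (PSet β) :=
  hf.mapsTo_rad.union_union hf.mapsTo_preimage_neg_rad

theorem injOn_preimage_neg (hf : IsHom f) {s : Set α} (hs : Set.InjOn f s) :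
    Set.InjOn f (MV.neg ⁻¹' s) := fun x hx y hy hxy =>
  MV.neg_injective <| hs hx hy <| by rw [hf.map_neg, hf.map_neg, hxy]

end IsHom

section Prod

variable {α β : Type*} [MV α] [MV β]

theorem isHom_fst : IsHom (Prod.fst : α × β → α) :=
  ⟨rfl, fun _ _ => rfl, fun _ => rfl⟩

theorem isHom_snd : IsHom (Prod.snd : α × β → β) :=
  ⟨rfl, fun _ _ => rfl, fun _ => rfl⟩

theorem isHom_diag : IsHom (fun a : α => (a, a)) :=
  ⟨rfl, fun _ _ => rfl, fun _ => rfl⟩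

theorem nsmul_prod (n : ℕ) (p : α × β) : MV.nsmul n p = (MV.nsmul n p.1, MV.nsmul n p.2) :=
  Prod.ext (isHom_fst.map_nsmul n p) (isHom_snd.map_nsmul n p)

theorem rad_prod : Rad (α × β) = Rad α ×ˢ Rad β := by
  refine Set.Subset.antisymm (fun p hp => ⟨isHom_fst.mapsTo_rad hp, isHom_snd.mapsTo_rad hp⟩) ?_
  rintro p ⟨h₁, h₂⟩ n
  rw [nsmul_prod]
  exact Prod.ext (h₁ n) (h₂ n)

theorem pSet_prod : PSet (α × β) =
    Rad α ×ˢ Rad β ∪ (MV.neg ⁻¹' Rad α) ×ˢ (MV.neg ⁻¹' Rad β) := by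
  rw [PSet, rad_prod]
  rfl

end Prod

/-- The kernel pair `Eq(f)` of a map, as a subset of the product rather than as a type. Hence
`P(Eq(f))` is encoded as `PSet (α × α) ∩ kernelPair f`; this is legitimate because the radical of
a subalgebra is the trace of the radical of the whole algebra. -/
def kernelPair {α β : Type*} (f : α → β) : Set (α × α) := {p | f p.1 = f p.2}

section NormalExtension

variable {α β : Type*} [MV α] {f : α → β}

theorem injOn_rad_of_injOn_fst
    (h : Set.InjOn Prod.fst (PSet (α × α) ∩ kernelPair f)) : Set.InjOn f (Rad α) := by
  intro x hx y hy hxy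
  have mem_pSet {z : α} (hz : z ∈ Rad α) : (x, z) ∈ PSet (α × α) := by
    rw [pSet_prod]
    exact .inl ⟨hx, hz⟩
  exact congrArg Prod.snd (h ⟨mem_pSet hx, rfl⟩ ⟨mem_pSet hy, hxy⟩ rfl)

theorem surjOn_fst_pSet_inter_kernelPair (f : α → β) :
    Set.SurjOn Prod.fst (PSet (α × α) ∩ kernelPair f) (PSet α) :=
  fun x hx => ⟨(x, x), ⟨isHom_diag.mapsTo_pSet hx, rfl⟩, rfl⟩

variable [MV β]

theorem IsHom.injOn_fst_of_injOn_rad (hf : IsHom f) (h : Set.InjOn f (Rad α)) :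
    Set.InjOn Prod.fst (PSet (α × α) ∩ kernelPair f) := by
  by_cases hα : IsTrivial α
  · have := hα.subsingleton
    exact Set.injOn_of_subsingleton _ _
  rintro ⟨x, y⟩ ⟨hy, hxy⟩ ⟨_, z⟩ ⟨hz, hxz⟩ rfl
  have hyz : f y = f z := hxy.symm.trans hxz
  have disjoint := Set.disjoint_left.1 (disjoint_rad_preimage_neg_rad hα)
  rw [pSet_prod] at hy hz
  refine Prod.ext rfl ?_
  rcases hy with ⟨hx, hy⟩ | ⟨hx, hy⟩ <;> rcases hz with ⟨hx', hz⟩ | ⟨hx', hz⟩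
  · exact h hy hz hyz
  · exact absurd hx' (disjoint hx)
  · exact absurd hx (disjoint hx')
  · exact hf.injOn_preimage_neg h hy hz hyz

theorem IsHom.bijOn_fst_iff_injOn_rad (hf : IsHom f) :
    Set.BijOn Prod.fst (PSet (α × α) ∩ kernelPair f) (PSet α) ↔ Set.InjOn f (Rad α) :=
  ⟨fun h => injOn_rad_of_injOn_fst h.injOn, fun h =>
    ⟨isHom_fst.mapsTo_pSet.mono_left Set.inter_subset_left, hf.injOn_fst_of_injOn_rad h,
      surjOn_fst_pSet_inter_kernelPair f⟩⟩

theorem IsHom.injOn_pSet_of_injOn_rad (hf : IsHom f) (hβ : ¬ IsTrivial β)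
    (h : Set.InjOn f (Rad α)) : Set.InjOn f (PSet α) := by
  have disjoint := disjoint_rad_preimage_neg_rad hβ
  have disjoint_source : Disjoint (Rad α) (MV.neg ⁻¹' Rad α) :=
    (disjoint.preimage f).mono hf.mapsTo_rad hf.mapsTo_preimage_neg_rad
  exact (Set.injOn_union disjoint_source).2 ⟨h, hf.injOn_preimage_neg h, fun _ hx _ hy =>
    disjoint.ne_of_mem (hf.mapsTo_rad hx) (hf.mapsTo_preimage_neg_rad hy)⟩

theorem rad_eq_singleton_zero_of_injOn (hβ : IsTrivial β) (h : Set.InjOn f (Rad α)) :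
    Rad α = {MV.zero} := by
  have := hβ.subsingleton
  exact Set.eq_singleton_iff_unique_mem.2
    ⟨zero_mem_rad α, fun x hx => h hx (zero_mem_rad α) (Subsingleton.elim _ _)⟩

theorem IsHom.injOn_rad_iff (hf : IsHom f) :
    Set.InjOn f (Rad α) ↔
      Set.InjOn f (PSet α) ∨ (Rad α = {MV.zero} ∧ ¬ IsTrivial α ∧ IsTrivial β) := by
  constructor
  · intro h
    by_cases hβ : IsTrivial β
    · by_cases hα : IsTrivial α
      · have := hα.subsingleton
        exact .inl (Set.injOn_of_subsingleton _ _)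
      · exact .inr ⟨rad_eq_singleton_zero_of_injOn hβ h, hα, hβ⟩
    · exact .inl (hf.injOn_pSet_of_injOn_rad hβ h)
  · rintro (h | ⟨hrad, -⟩)
    · exact h.mono Set.subset_union_left
    · rw [hrad]
      exact Set.injOn_singleton f MV.zero

theorem normal_extension_iff_general (hf : IsHom f) :
    Set.BijOn (Prod.fst : α × α → α)
        (PSet (α × α) ∩ {p : α × α | f p.1 = f p.2}) (PSet α) ↔
    (Set.InjOn f (PSet α) ∨
      (Rad α = ({MV.zero} : Set α) ∧ ¬ IsTrivial α ∧ IsTrivial β)) :=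
  hf.bijOn_fst_iff_injOn_rad.trans hf.injOn_rad_iff

end NormalExtension

/-- A surjective homomorphism `f : A → B` is a normal extension for the Galois
structure of the semisimple reflection — i.e. the restriction
`P(π₁) : P(Eq(f)) → P(A)` of the first projection of the kernel pair
`Eq(f) = {(a₁,a₂) : f a₁ = f a₂} ⊆ A × A` is an isomorphism — iff
`P(f) : P(A) → P(B)` is injective, or `Rad(A) = {0}`, `A` is nontrivial and
`B` is trivial. -/
theorem normal_extension_iff {α β : Type*} [MV α] [MV β]
    {f : α → β} (hf : IsHom f) (hfs : Function.Surjective f) :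
    Set.BijOn (Prod.fst : α × α → α)
        (PSet (α × α) ∩ {p : α × α | f p.1 = f p.2}) (PSet α) ↔
    (Set.InjOn f (PSet α) ∨
      (Rad α = ({MV.zero} : Set α) ∧ ¬ IsTrivial α ∧ IsTrivial β)) :=
  normal_extension_iff_general hf

end MVPaper
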